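/- Let $\omega \in A_1$ and $0 < r < 1$. Define $\|f\|_{BMO^r(\omega)} = \sup_Q \left(\frac{1}{\omega(Q)}\int_Q |f(x)-f_Q|^r\,\omega(x)^{1-r}\,dx\right)^{1/r}$ and $\|f\|_{BMO_r(\omega)} = \sup_Q \inf_c \left(\frac{1}{\omega(Q)}\int_Q \left(\frac{|f(x)-c|}{\omega(x)}\right)^r \omega(x)\,dx\right)^{1/r}$. Then these two quantities are equivalent: there is a constant $C \geq 1$ depending only on $n$, $r$, $[\omega]_{A_1}$ such that $\|f\|_{BMO_r(\omega)} \leq \|f\|_{BMO^r(\omega)} \leq C\,\|f\|_{BMO_r(\omega)}$ for all locally integrable $f$. -/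

import Mathlib

open MeasureTheory Real
noncomputable section

abbrev Rn (n : ℕ) := EuclideanSpace ℝ (Fin n)

def cube {n : ℕ} (c : Rn n) (r : ℝ) : Set (Rn n) := {y | ∀ i, |y i - c i| ≤ r / 2}

def wMeas {n : ℕ} (ω : Rn n → ℝ) (S : Set (Rn n)) : ℝ := ∫ x in S, ω x

def avg {n : ℕ} (f : Rn n → ℝ) (c : Rn n) (r : ℝ) : ℝ := (∫ x in cube c r, f x) / r ^ n

def IsA1 {n : ℕ} (ω : Rn n → ℝ) (A : ℝ) : Prop :=
  (∀ x, 0 < ω x) ∧ LocallyIntegrable ω volume ∧ 1 ≤ A ∧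
  ∀ (c : Rn n) (r : ℝ), 0 < r →
    ∀ᵐ x ∂(volume : Measure (Rn n)), x ∈ cube c r → wMeas ω (cube c r) / r ^ n ≤ A * ω x

def IsAp {n : ℕ} (ω : Rn n → ℝ) (p A : ℝ) : Prop :=
  (∀ x, 0 < ω x) ∧ LocallyIntegrable ω volume ∧
  ∀ (c : Rn n) (r : ℝ), 0 < r →
    (wMeas ω (cube c r) / r ^ n) *
      ((∫ x in cube c r, ω x ^ (-(1 / (p - 1)))) / r ^ n) ^ (p - 1) ≤ A

def IsAinf {n : ℕ} (ω : Rn n → ℝ) : Prop := ∃ p A, 1 < p ∧ IsAp ω p A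

/-!
Choose near-optimal constants `κ_Q`. On a cube `Q` the `A₁` condition bounds `ω` from below by a
multiple of its mean, so the weighted `L^r` bound for `f - κ_Q` becomes an unweighted one. A
Calderón–Zygmund stopping time for `|f - κ_Q|^r` gives cubes `P ⊆ Q` covering at most half of `Q`,
off which `|f - κ_Q|` is bounded by a multiple of `ω(Q) / |Q|`, and on which `κ_P` is close to
`κ_Q`. Hence, if `K` is the best constant in `∫_P |f - κ_P| ≤ K ω(P)`, then `∫_Q |f - κ_Q|` is at
most `K ω(⋃ P) + C ω(Q)`. By `A₁` again `ω(⋃ P) ≤ (1 - 1 / (2A)) ω(Q)`, so `K` can be absorbed, once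
`f` and `κ` have been truncated to make it finite. Thus `|κ_Q - f_Q| ≤ C ω(Q) / |Q|`, and Hölder's
inequality `∫_Q ω^(1-r) ≤ ω(Q)^(1-r) |Q|^r` passes from `κ_Q` to `f_Q`.
-/

section SelfImprovement

open scoped ENNReal NNReal
open Filter

variable {X : Type*} [MeasurableSpace X] {μ : Measure X} {𝓠 : Set (Set X)} {D A B : ℝ≥0} {r : ℝ}
  {w : X → ℝ≥0∞} {f : X → ℝ} {κ : Set X → ℝ} {Q : Set X} {k : ℝ} {a K : ℝ≥0∞}

/-- `S` is a Calderón–Zygmund family for `h` at height `L` in `Q`: countably many sets of the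
class `𝓠`, essentially disjoint, on which the average of `h` lies in `[L, D * L]`, and outside of
which `h ≤ L`. -/
structure IsCalderonZygmundFamily (μ : Measure X) (𝓠 : Set (Set X)) (D : ℝ≥0) (h : X → ℝ≥0∞)
    (L : ℝ≥0∞) (Q : Set X) (S : Set (Set X)) : Prop where
  subset_class : S ⊆ 𝓠
  countable : S.Countable
  subset : ∀ P ∈ S, P ⊆ Q
  pairwise_aedisjoint : S.Pairwise (AEDisjoint μ)
  mul_measure_le : ∀ P ∈ S, L * μ P ≤ ∫⁻ x in P, h x ∂μ
  lintegral_le : ∀ P ∈ S, ∫⁻ x in P, h x ∂μ ≤ D * (L * μ P)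
  ae_le : ∀ᵐ x ∂μ.restrict (Q \ ⋃₀ S), h x ≤ L

/-- A class `𝓠` of sets, the cubes, in which Calderón–Zygmund families exist. It isolates all
that the self-improvement argument needs to know about cubes. -/
structure IsCalderonZygmundBasis (μ : Measure X) (𝓠 : Set (Set X)) (D : ℝ≥0) : Prop where
  measurableSet : ∀ Q ∈ 𝓠, MeasurableSet Q
  measure_ne_zero : ∀ Q ∈ 𝓠, μ Q ≠ 0
  measure_ne_top : ∀ Q ∈ 𝓠, μ Q ≠ ∞
  exists_family : ∀ Q ∈ 𝓠, ∀ h : X → ℝ≥0∞, AEMeasurable h μ → ∀ L : ℝ≥0∞, L ≠ ∞ →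
    ∫⁻ x in Q, h x ∂μ ≤ L * μ Q → ∃ S, IsCalderonZygmundFamily μ 𝓠 D h L Q S

/-- The weight `w` belongs to the Muckenhoupt class `A₁` of the class of sets `𝓠`, with
constant `A`. -/
structure IsA1Weight (μ : Measure X) (𝓠 : Set (Set X)) (w : X → ℝ≥0∞) (A : ℝ≥0) : Prop where
  aemeasurable : AEMeasurable w μ
  measure_ne_zero : ∀ Q ∈ 𝓠, μ.withDensity w Q ≠ 0
  measure_ne_top : ∀ Q ∈ 𝓠, μ.withDensity w Q ≠ ∞
  ae_le : ∀ Q ∈ 𝓠, ∀ᵐ x ∂μ.restrict Q, μ.withDensity w Q / μ Q ≤ A * w x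

namespace IsCalderonZygmundFamily

variable {h : X → ℝ≥0∞} {L : ℝ≥0∞} {S : Set (Set X)}

lemma sUnion_subset (hS : IsCalderonZygmundFamily μ 𝓠 D h L Q S) : ⋃₀ S ⊆ Q :=
  Set.sUnion_subset hS.subset

lemma measurableSet_sUnion (h𝓠 : IsCalderonZygmundBasis μ 𝓠 D)
    (hS : IsCalderonZygmundFamily μ 𝓠 D h L Q S) : MeasurableSet (⋃₀ S) :=
  .sUnion hS.countable fun P hP => h𝓠.measurableSet P (hS.subset_class hP)

lemma measure_sUnion_le (h𝓠 : IsCalderonZygmundBasis μ 𝓠 D)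
    (hS : IsCalderonZygmundFamily μ 𝓠 D h L Q S) {ν₁ ν₂ : Measure X} (hν₂ : ν₂ ≪ μ)
    (hle : ∀ P ∈ S, ν₁ P ≤ ν₂ P) : ν₁ (⋃₀ S) ≤ ν₂ (⋃₀ S) := by
  calc ν₁ (⋃₀ S) ≤ ∑' P : S, ν₁ P := by
        rw [Set.sUnion_eq_biUnion]
        exact measure_biUnion_le ν₁ hS.countable _
    _ ≤ ∑' P : S, ν₂ P := ENNReal.tsum_le_tsum fun P => hle P P.2
    _ = ν₂ (⋃₀ S) := (measure_sUnion₀ hS.countable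
        (hS.pairwise_aedisjoint.imp fun _ _ hd => hν₂ hd) fun P hP =>
          (h𝓠.measurableSet P (hS.subset_class hP)).nullMeasurableSet).symm

lemma mul_measure_sUnion_le (h𝓠 : IsCalderonZygmundBasis μ 𝓠 D)
    (hS : IsCalderonZygmundFamily μ 𝓠 D h L Q S) : L * μ (⋃₀ S) ≤ ∫⁻ x in Q, h x ∂μ := by
  have hle := hS.measure_sUnion_le h𝓠 (ν₁ := L • μ) (withDensity_absolutelyContinuous μ h)
    fun P hP => by
      rw [withDensity_apply _ (h𝓠.measurableSet P (hS.subset_class hP))]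
      exact hS.mul_measure_le P hP
  rw [withDensity_apply _ (hS.measurableSet_sUnion h𝓠)] at hle
  exact hle.trans (lintegral_mono_set hS.sUnion_subset)

end IsCalderonZygmundFamily

lemma IsCalderonZygmundBasis.of_measurePreserving {Y : Type*} [MeasurableSpace Y] {ν : Measure Y}
    (h𝓠 : IsCalderonZygmundBasis μ 𝓠 D) (e : X ≃ᵐ Y) (he : MeasurePreserving e μ ν) :
    IsCalderonZygmundBasis ν {Q | e ⁻¹' Q ∈ 𝓠} D where
  measurableSet Q hQ := e.measurableSet_preimage.1 (h𝓠.measurableSet _ hQ)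
  measure_ne_zero Q hQ := by
    rw [← he.measure_preimage_equiv]
    exact h𝓠.measure_ne_zero _ hQ
  measure_ne_top Q hQ := by
    rw [← he.measure_preimage_equiv]
    exact h𝓠.measure_ne_top _ hQ
  exists_family Q hQ h hh L hL hle := by
    have hint (P : Set Y) : ∫⁻ x in e ⁻¹' P, h (e x) ∂μ = ∫⁻ y in P, h y ∂ν :=
      he.setLIntegral_comp_preimage_emb e.measurableEmbedding h P
    rw [← hint, ← he.measure_preimage_equiv] at hle
    obtain ⟨S, hS⟩ := h𝓠.exists_family _ hQ _
      (hh.comp_quasiMeasurePreserving he.quasiMeasurePreserving) L hL hle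
    refine ⟨{P | e ⁻¹' P ∈ S}, fun P hP => hS.subset_class hP,
      hS.countable.preimage e.surjective.preimage_injective,
      fun P hP => e.surjective.preimage_subset_preimage_iff.1 (hS.subset _ hP),
      fun P hP P' hP' hne => ?_, fun P hP => ?_, fun P hP => ?_, ?_⟩
    · rw [AEDisjoint, ← he.measure_preimage_equiv]
      exact hS.pairwise_aedisjoint hP hP' (e.surjective.preimage_injective.ne hne)
    · rw [← hint, ← he.measure_preimage_equiv]
      exact hS.mul_measure_le _ hP
    · rw [← hint, ← he.measure_preimage_equiv]
      exact hS.lintegral_le _ hP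
    · have hsUnion : e ⁻¹' ⋃₀ {P | e ⁻¹' P ∈ S} = ⋃₀ S := by
        ext x
        refine ⟨fun ⟨P, hP, hx⟩ => ⟨_, hP, hx⟩, fun ⟨P, hP, hx⟩ => ⟨e.symm ⁻¹' P, ?_, ?_⟩⟩
        · simpa [← Set.preimage_comp] using hP
        · simpa using hx
      have hrestrict :=
        he.restrict_preimage_emb e.measurableEmbedding (Q \ ⋃₀ {P | e ⁻¹' P ∈ S})
      rw [← hrestrict.map_eq, e.measurableEmbedding.ae_map_iff, Set.preimage_sdiff, hsUnion]
      exact hS.ae_le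

namespace IsA1Weight

lemma div_mul_measure_le (hw : IsA1Weight μ 𝓠 w A) (hQ : Q ∈ 𝓠) {S : Set X} (hSQ : S ⊆ Q)
    (hS : MeasurableSet S) :
    μ.withDensity w Q / μ Q * μ S ≤ A * μ.withDensity w S := by
  calc μ.withDensity w Q / μ Q * μ S = ∫⁻ _ in S, μ.withDensity w Q / μ Q ∂μ :=
        (setLIntegral_const _ _).symm
    _ ≤ ∫⁻ x in S, A * w x ∂μ :=
        lintegral_mono_ae (ae_restrict_of_ae_restrict_of_subset hSQ (hw.ae_le Q hQ))
    _ = A * μ.withDensity w S := by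
        rw [lintegral_const_mul' _ _ ENNReal.coe_ne_top, withDensity_apply _ hS]

lemma withDensity_le_mul_sdiff (h𝓠 : IsCalderonZygmundBasis μ 𝓠 D) (hw : IsA1Weight μ 𝓠 w A)
    (hQ : Q ∈ 𝓠) {E : Set X} (hEQ : E ⊆ Q) (hE : MeasurableSet E) (hhalf : 2 * μ E ≤ μ Q) :
    μ.withDensity w Q ≤ 2 * A * μ.withDensity w (Q \ E) := by
  have hsplit : μ E + μ (Q \ E) = μ Q := by
    rw [measure_add_sdiff hE.nullMeasurableSet, Set.union_eq_right.2 hEQ]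
  have hE_fin : μ E ≠ ∞ := ne_top_of_le_ne_top (h𝓠.measure_ne_top Q hQ) (measure_mono hEQ)
  have hEle : μ E ≤ μ (Q \ E) := by
    rwa [← hsplit, two_mul, ENNReal.add_le_add_iff_left hE_fin] at hhalf
  have hQle : μ Q ≤ 2 * μ (Q \ E) := by rw [← hsplit, two_mul]; gcongr
  calc μ.withDensity w Q = μ.withDensity w Q / μ Q * μ Q :=
        (ENNReal.div_mul_cancel (h𝓠.measure_ne_zero Q hQ) (h𝓠.measure_ne_top Q hQ)).symm
    _ ≤ μ.withDensity w Q / μ Q * (2 * μ (Q \ E)) := by gcongr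
    _ = 2 * (μ.withDensity w Q / μ Q * μ (Q \ E)) := by ring
    _ ≤ 2 * (A * μ.withDensity w (Q \ E)) := by
        grw [hw.div_mul_measure_le hQ Set.sdiff_subset ((h𝓠.measurableSet Q hQ).diff hE)]
    _ = 2 * A * μ.withDensity w (Q \ E) := by ring

lemma one_le_const (h𝓠 : IsCalderonZygmundBasis μ 𝓠 D) (hw : IsA1Weight μ 𝓠 w A)
    (hQ : Q ∈ 𝓠) : 1 ≤ A := by
  have h := hw.div_mul_measure_le hQ subset_rfl (h𝓠.measurableSet Q hQ)
  rw [ENNReal.div_mul_cancel (h𝓠.measure_ne_zero Q hQ) (h𝓠.measure_ne_top Q hQ)] at h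
  have hA := (ENNReal.div_le_iff (hw.measure_ne_zero Q hQ) (hw.measure_ne_top Q hQ)).2 h
  rw [ENNReal.div_self (hw.measure_ne_zero Q hQ) (hw.measure_ne_top Q hQ)] at hA
  exact_mod_cast hA

end IsA1Weight

/-- The `L^r` oscillations of `f` around the constants `κ Q` are bounded by `B` times the mean
of `w`; for `r = 1` this says that `f` has bounded mean oscillation with respect to `w`. -/
def HasRpowOscillationLE (μ : Measure X) (𝓠 : Set (Set X)) (w : X → ℝ≥0∞) (r : ℝ) (f : X → ℝ)
    (κ : Set X → ℝ) (B : ℝ≥0) : Prop :=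
  ∀ Q ∈ 𝓠, ∫⁻ x in Q, ‖f x - κ Q‖ₑ ^ r ∂μ ≤ (B * (μ.withDensity w Q / μ Q)) ^ r * μ Q

lemma enorm_sub_rpow_mul_measure_le (hr0 : 0 ≤ r) (hr1 : r ≤ 1) (hf : AEMeasurable f μ)
    (S : Set X) (a b : ℝ) :
    ‖a - b‖ₑ ^ r * μ S ≤ ∫⁻ x in S, ‖f x - a‖ₑ ^ r ∂μ + ∫⁻ x in S, ‖f x - b‖ₑ ^ r ∂μ := by
  have hpt (x : X) : ‖a - b‖ₑ ^ r ≤ ‖f x - a‖ₑ ^ r + ‖f x - b‖ₑ ^ r :=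
    calc ‖a - b‖ₑ ^ r ≤ (‖f x - a‖ₑ + ‖f x - b‖ₑ) ^ r := by
          gcongr
          rw [← sub_sub_sub_cancel_left b a (f x), add_comm]
          exact enorm_sub_le
      _ ≤ _ := ENNReal.rpow_add_le_add_rpow _ _ hr0 hr1
  rw [← lintegral_add_left' (((hf.sub_const a).enorm.pow_const r).restrict), ← setLIntegral_const]
  exact lintegral_mono hpt

lemma le_rpow_inv_mul_of_rpow_le {x y G : ℝ≥0∞} (hr : 0 < r) (h : x ^ r ≤ G * y ^ r) :
    x ≤ G ^ r⁻¹ * y := by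
  rwa [← ENNReal.rpow_le_rpow_iff hr, ENNReal.mul_rpow_of_nonneg _ _ hr.le,
    ENNReal.rpow_inv_rpow hr.ne']

lemma setLIntegral_enorm_sub_le_of_rpow_average_le (h𝓠 : IsCalderonZygmundBasis μ 𝓠 D)
    (hr0 : 0 < r) (hr1 : r ≤ 1) (hf : AEMeasurable f μ)
    (hosc : HasRpowOscillationLE μ 𝓠 w r f κ B) (hQ : Q ∈ 𝓠)
    (havg : ∫⁻ x in Q, ‖f x - k‖ₑ ^ r ∂μ ≤ D * (2 * (B * a) ^ r * μ Q))
    (hK : ∫⁻ x in Q, ‖f x - κ Q‖ₑ ∂μ ≤ K * μ.withDensity w Q) :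
    ∫⁻ x in Q, ‖f x - k‖ₑ ∂μ ≤ (K + (2 * D + 2) ^ r⁻¹ * B) * μ.withDensity w Q +
      (2 * D + 2) ^ r⁻¹ * (B * a) * μ Q := by
  have hQ0 := h𝓠.measure_ne_zero Q hQ
  have hQt := h𝓠.measure_ne_top Q hQ
  set G : ℝ≥0∞ := (2 * D + 2) ^ r⁻¹
  set b := μ.withDensity w Q / μ Q with hb
  have hconst : ‖κ Q - k‖ₑ ≤ G * (B * b + B * a) := by
    refine le_rpow_inv_mul_of_rpow_le hr0 ((ENNReal.mul_le_mul_iff_left hQ0 hQt).1 ?_)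
    calc ‖κ Q - k‖ₑ ^ r * μ Q
        ≤ ∫⁻ x in Q, ‖f x - κ Q‖ₑ ^ r ∂μ + ∫⁻ x in Q, ‖f x - k‖ₑ ^ r ∂μ :=
          enorm_sub_rpow_mul_measure_le hr0.le hr1 hf Q _ _
      _ ≤ (B * b) ^ r * μ Q + D * (2 * (B * a) ^ r * μ Q) := add_le_add (hosc Q hQ) havg
      _ ≤ 2 * (B * b + B * a) ^ r * μ Q + D * (2 * (B * b + B * a) ^ r * μ Q) := by
          gcongr
          · exact (ENNReal.rpow_le_rpow le_self_add hr0.le).trans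
              (le_mul_of_one_le_left' one_le_two)
          · exact le_add_self
      _ = (2 * D + 2) * (B * b + B * a) ^ r * μ Q := by ring
  calc ∫⁻ x in Q, ‖f x - k‖ₑ ∂μ ≤ ∫⁻ x in Q, (‖f x - κ Q‖ₑ + ‖κ Q - k‖ₑ) ∂μ := by
        refine lintegral_mono fun x => ?_
        rw [← sub_add_sub_cancel (f x) (κ Q) k]
        exact enorm_add_le _ _
    _ = ∫⁻ x in Q, ‖f x - κ Q‖ₑ ∂μ + ‖κ Q - k‖ₑ * μ Q := by
        rw [lintegral_add_right _ measurable_const, setLIntegral_const]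
    _ ≤ K * μ.withDensity w Q + G * (B * b + B * a) * μ Q := by gcongr
    _ = K * μ.withDensity w Q + G * B * (b * μ Q) + G * (B * a) * μ Q := by ring
    _ = _ := by rw [hb, ENNReal.div_mul_cancel hQ0 hQt]; ring

lemma setLIntegral_sUnion_enorm_sub_le (h𝓠 : IsCalderonZygmundBasis μ 𝓠 D)
    (hr0 : 0 < r) (hr1 : r ≤ 1) (hf : AEMeasurable f μ)
    (hosc : HasRpowOscillationLE μ 𝓠 w r f κ B) {S : Set (Set X)}
    (hS : IsCalderonZygmundFamily μ 𝓠 D (fun x => ‖f x - k‖ₑ ^ r) (2 * (B * a) ^ r) Q S)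
    (hK : ∀ P ∈ 𝓠, P ⊆ Q → ∫⁻ x in P, ‖f x - κ P‖ₑ ∂μ ≤ K * μ.withDensity w P) :
    ∫⁻ x in ⋃₀ S, ‖f x - k‖ₑ ∂μ ≤ (K + (2 * D + 2) ^ r⁻¹ * B) * μ.withDensity w (⋃₀ S) +
      (2 * D + 2) ^ r⁻¹ * (B * a) * μ (⋃₀ S) := by
  rw [← withDensity_apply _ (hS.measurableSet_sUnion h𝓠)]
  refine hS.measure_sUnion_le h𝓠 (ν₂ := (K + (2 * D + 2) ^ r⁻¹ * B) • μ.withDensity w +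
      ((2 * D + 2) ^ r⁻¹ * (B * a)) • μ) ?_ fun P hP => ?_
  · exact .add_left (Measure.smul_absolutelyContinuous.trans (withDensity_absolutelyContinuous _ _))
      Measure.smul_absolutelyContinuous
  · have hP𝓠 := hS.subset_class hP
    rw [withDensity_apply _ (h𝓠.measurableSet P hP𝓠)]
    exact setLIntegral_enorm_sub_le_of_rpow_average_le h𝓠 hr0 hr1 hf hosc hP𝓠
      (hS.lintegral_le P hP) (hK P hP𝓠 (hS.subset P hP))

lemma setLIntegral_sdiff_enorm_sub_le (hr0 : 0 < r) {S : Set (Set X)}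
    (hS : IsCalderonZygmundFamily μ 𝓠 D (fun x => ‖f x - k‖ₑ ^ r) (2 * (B * a) ^ r) Q S) :
    ∫⁻ x in Q \ ⋃₀ S, ‖f x - k‖ₑ ∂μ ≤ (2 * D + 2) ^ r⁻¹ * (B * a) * μ (Q \ ⋃₀ S) := by
  rw [← setLIntegral_const]
  refine lintegral_mono_ae (hS.ae_le.mono fun x hx => le_rpow_inv_mul_of_rpow_le hr0 (hx.trans ?_))
  gcongr
  exact le_add_self

lemma setLIntegral_enorm_sub_add_le (h𝓠 : IsCalderonZygmundBasis μ 𝓠 D)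
    (hw : IsA1Weight μ 𝓠 w A) (hr0 : 0 < r) (hr1 : r ≤ 1) (hB : B ≠ 0) (hf : AEMeasurable f μ)
    (hosc : HasRpowOscillationLE μ 𝓠 w r f κ B) (hQ : Q ∈ 𝓠)
    (hK : ∀ P ∈ 𝓠, P ⊆ Q → ∫⁻ x in P, ‖f x - κ P‖ₑ ∂μ ≤ K * μ.withDensity w P) :
    ∫⁻ x in Q, ‖f x - κ Q‖ₑ ∂μ + K * (μ.withDensity w Q / (2 * A)) ≤
      (K + 2 * ((2 * D + 2) ^ r⁻¹ * B)) * μ.withDensity w Q := by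
  have hQ0 := h𝓠.measure_ne_zero Q hQ
  have hQt := h𝓠.measure_ne_top Q hQ
  set W := μ.withDensity w
  set G : ℝ≥0∞ := (2 * D + 2) ^ r⁻¹
  set a := W Q / μ Q with ha
  have hBa0 : B * a ≠ 0 :=
    mul_ne_zero (mod_cast hB) (ENNReal.div_ne_zero.2 ⟨hw.measure_ne_zero Q hQ, hQt⟩)
  have hBat : B * a ≠ ∞ :=
    ENNReal.mul_ne_top ENNReal.coe_ne_top (ENNReal.div_ne_top (hw.measure_ne_top Q hQ) hQ0)
  have hβ0 : (B * a) ^ r ≠ 0 := (ENNReal.rpow_pos hBa0.bot_lt hBat).ne'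
  have hβt : (B * a) ^ r ≠ ∞ := ENNReal.rpow_ne_top_of_nonneg hr0.le hBat
  obtain ⟨S, hS⟩ := h𝓠.exists_family Q hQ (fun x => ‖f x - κ Q‖ₑ ^ r)
    ((hf.sub_const _).enorm.pow_const r) (2 * (B * a) ^ r) (ENNReal.mul_ne_top (by simp) hβt)
    ((hosc Q hQ).trans (by rw [mul_assoc]; exact le_mul_of_one_le_left' one_le_two))
  set E := ⋃₀ S
  have hE : MeasurableSet E := hS.measurableSet_sUnion h𝓠
  have hEQ : E ⊆ Q := hS.sUnion_subset
  have hhalf : 2 * μ E ≤ μ Q := by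
    have h := (hS.mul_measure_sUnion_le h𝓠).trans (hosc Q hQ)
    rwa [mul_comm 2, mul_assoc, ENNReal.mul_le_mul_iff_right hβ0 hβt] at h
  have hsdiff : W Q / (2 * A) ≤ W (Q \ E) :=
    ENNReal.div_le_of_le_mul' (hw.withDensity_le_mul_sdiff h𝓠 hQ hEQ hE hhalf)
  have hμ : μ E + μ (Q \ E) = μ Q := by
    rw [measure_add_sdiff hE.nullMeasurableSet, Set.union_eq_right.2 hEQ]
  have hW : W E + W (Q \ E) = W Q := by
    rw [measure_add_sdiff hE.nullMeasurableSet, Set.union_eq_right.2 hEQ]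
  have hsplit : ∫⁻ x in Q, ‖f x - κ Q‖ₑ ∂μ =
      ∫⁻ x in E, ‖f x - κ Q‖ₑ ∂μ + ∫⁻ x in Q \ E, ‖f x - κ Q‖ₑ ∂μ := by
    rw [← lintegral_inter_add_sdiff _ Q hE, Set.inter_eq_right.2 hEQ]
  calc ∫⁻ x in Q, ‖f x - κ Q‖ₑ ∂μ + K * (W Q / (2 * A))
      ≤ ((K + G * B) * W E + G * (B * a) * μ E + G * (B * a) * μ (Q \ E)) + K * W (Q \ E) := by
        rw [hsplit]
        gcongr
        · exact setLIntegral_sUnion_enorm_sub_le h𝓠 hr0 hr1 hf hosc hS hK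
        · exact setLIntegral_sdiff_enorm_sub_le hr0 hS
    _ = K * (W E + W (Q \ E)) + G * B * W E + G * B * (a * (μ E + μ (Q \ E))) := by ring
    _ = K * W Q + G * B * W E + G * B * W Q := by
        rw [hμ, hW, ha, ENNReal.div_mul_cancel hQ0 hQt]
    _ ≤ K * W Q + G * B * W Q + G * B * W Q := by gcongr
    _ = (K + 2 * (G * B)) * W Q := by ring

lemma iSup_setLIntegral_div_ne_top (h𝓠 : IsCalderonZygmundBasis μ 𝓠 D)
    (hw : IsA1Weight μ 𝓠 w A) (hQ : Q ∈ 𝓠) {g : Set X → X → ℝ≥0∞} {M : ℝ≥0}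
    (hM : ∀ P ∈ 𝓠, ∀ x, g P x ≤ M) :
    ⨆ P : {P // P ∈ 𝓠 ∧ P ⊆ Q}, (∫⁻ x in P, g P x ∂μ) / μ.withDensity w P ≠ ∞ := by
  have ha0 : μ.withDensity w Q / μ Q ≠ 0 :=
    ENNReal.div_ne_zero.2 ⟨hw.measure_ne_zero Q hQ, h𝓠.measure_ne_top Q hQ⟩
  refine ne_top_of_le_ne_top (ENNReal.mul_ne_top ENNReal.coe_ne_top
    (ENNReal.div_ne_top ENNReal.coe_ne_top ha0 : A / (μ.withDensity w Q / μ Q) ≠ ∞))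
    (iSup_le fun ⟨P, hP, hPQ⟩ => ENNReal.div_le_of_le_mul ?_ : _ ≤ (M : ℝ≥0∞) * _)
  calc ∫⁻ x in P, g P x ∂μ ≤ ∫⁻ _ in P, M ∂μ := lintegral_mono (hM P hP)
    _ = M * μ P := setLIntegral_const _ _
    _ ≤ M * (A * μ.withDensity w P / (μ.withDensity w Q / μ Q)) := by
        gcongr
        rw [ENNReal.le_div_iff_mul_le (.inl ha0) (.inl (ENNReal.div_ne_top
          (hw.measure_ne_top Q hQ) (h𝓠.measure_ne_zero Q hQ))), mul_comm]
        exact hw.div_mul_measure_le hQ hPQ (h𝓠.measurableSet P hP)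
    _ = _ := by simp only [div_eq_mul_inv]; ring

lemma setLIntegral_enorm_sub_le_of_bounded (h𝓠 : IsCalderonZygmundBasis μ 𝓠 D)
    (hw : IsA1Weight μ 𝓠 w A) (hr0 : 0 < r) (hr1 : r ≤ 1) (hB : B ≠ 0) (hf : AEMeasurable f μ)
    (hosc : HasRpowOscillationLE μ 𝓠 w r f κ B) {M : ℝ≥0}
    (hM : ∀ P ∈ 𝓠, ∀ x, ‖f x - κ P‖ₑ ≤ M) (hQ : Q ∈ 𝓠) :
    ∫⁻ x in Q, ‖f x - κ Q‖ₑ ∂μ ≤ 4 * A * (2 * D + 2) ^ r⁻¹ * B * μ.withDensity w Q := by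
  set W := μ.withDensity w
  set G : ℝ≥0∞ := (2 * D + 2) ^ r⁻¹
  let I := {P : Set X // P ∈ 𝓠 ∧ P ⊆ Q}
  have : Nonempty I := ⟨⟨Q, hQ, subset_rfl⟩⟩
  set K : ℝ≥0∞ := ⨆ P : I, (∫⁻ x in P, ‖f x - κ P‖ₑ ∂μ) / W P
  have hK (P : Set X) (hP : P ∈ 𝓠) (hPQ : P ⊆ Q) : ∫⁻ x in P, ‖f x - κ P‖ₑ ∂μ ≤ K * W P := by
    rw [← ENNReal.div_le_iff (hw.measure_ne_zero P hP) (hw.measure_ne_top P hP)]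
    exact le_iSup (fun P : I => (∫⁻ x in P, ‖f x - κ P‖ₑ ∂μ) / W P) ⟨P, hP, hPQ⟩
  have hKt : K ≠ ∞ := iSup_setLIntegral_div_ne_top h𝓠 hw hQ hM
  have habsorb : K + K / (2 * A) ≤ K + 2 * (G * B) := by
    rw [ENNReal.iSup_add]
    refine iSup_le fun ⟨P, hP, hPQ⟩ => ?_
    have hP0 := hw.measure_ne_zero P hP
    have hPt := hw.measure_ne_top P hP
    rw [← ENNReal.mul_le_mul_iff_left hP0 hPt, add_mul, ENNReal.div_mul_cancel hP0 hPt,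
      ENNReal.mul_comm_div]
    exact setLIntegral_enorm_sub_add_le h𝓠 hw hr0 hr1 hB hf hosc hP
      fun P' hP' hP'P => hK P' hP' (hP'P.trans hPQ)
  have hA : (2 * A : ℝ≥0∞) ≠ 0 :=
    mul_ne_zero two_ne_zero (mod_cast (one_pos.trans_le (hw.one_le_const h𝓠 hQ)).ne')
  have hK_le : K ≤ 4 * A * G * B := by
    rw [ENNReal.add_le_add_iff_left hKt,
      ENNReal.div_le_iff hA (ENNReal.mul_ne_top (by simp) ENNReal.coe_ne_top)] at habsorb
    exact habsorb.trans_eq (by ring)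
  exact (hK Q hQ subset_rfl).trans (by gcongr)

/-- The truncation of a real number to `[-m, m]`. -/
def truncate (m : ℕ) (t : ℝ) : ℝ := Set.projIcc (-m : ℝ) m (neg_le_self m.cast_nonneg) t

lemma enorm_truncate_sub_truncate_le (m : ℕ) (s t : ℝ) :
    ‖truncate m s - truncate m t‖ₑ ≤ ‖s - t‖ₑ := by
  simpa only [truncate, Subtype.edist_eq, edist_eq_enorm_sub, ENNReal.coe_one, one_mul] using
    LipschitzWith.projIcc (neg_le_self m.cast_nonneg) s t

lemma enorm_truncate_sub_truncate_le_two_mul (m : ℕ) (s t : ℝ) :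
    ‖truncate m s - truncate m t‖ₑ ≤ (2 * m : ℝ≥0) := by
  rw [enorm_le_coe, ← NNReal.coe_le_coe, coe_nnnorm, ← dist_eq_norm]
  refine (Real.dist_le_of_mem_Icc (Subtype.coe_prop _) (Subtype.coe_prop _)).trans_eq ?_
  push_cast
  ring

lemma measurable_truncate (m : ℕ) : Measurable (truncate m) :=
  (continuous_subtype_val.comp continuous_projIcc).measurable

lemma eventually_truncate_eq (t : ℝ) : ∀ᶠ m : ℕ in atTop, truncate m t = t :=
  (tendsto_natCast_atTop_atTop.eventually_ge_atTop |t|).mono fun _ hm =>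
    congrArg Subtype.val (Set.projIcc_of_mem _ (abs_le.1 hm))

lemma HasRpowOscillationLE.comp_truncate (hr0 : 0 ≤ r) (hosc : HasRpowOscillationLE μ 𝓠 w r f κ B)
    (m : ℕ) :
    HasRpowOscillationLE μ 𝓠 w r (fun x => truncate m (f x)) (fun Q => truncate m (κ Q)) B :=
  fun Q hQ => (hosc Q hQ).trans' <| lintegral_mono fun _ =>
    ENNReal.rpow_le_rpow (enorm_truncate_sub_truncate_le m _ _) hr0

theorem HasRpowOscillationLE.setLIntegral_enorm_sub_le (h𝓠 : IsCalderonZygmundBasis μ 𝓠 D)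
    (hosc : HasRpowOscillationLE μ 𝓠 w r f κ B) (hw : IsA1Weight μ 𝓠 w A) (hr0 : 0 < r)
    (hr1 : r ≤ 1) (hB : B ≠ 0) (hf : AEMeasurable f μ) (hQ : Q ∈ 𝓠) :
    ∫⁻ x in Q, ‖f x - κ Q‖ₑ ∂μ ≤ 4 * A * (2 * D + 2) ^ r⁻¹ * B * μ.withDensity w Q := by
  have hmeas (m : ℕ) : AEMeasurable (fun x => truncate m (f x)) μ :=
    (measurable_truncate m).comp_aemeasurable hf
  calc ∫⁻ x in Q, ‖f x - κ Q‖ₑ ∂μ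
      = ∫⁻ x in Q, liminf (fun m => ‖truncate m (f x) - truncate m (κ Q)‖ₑ) atTop ∂μ := by
        congr with x
        refine (tendsto_const_nhds.congr' ?_).liminf_eq.symm
        filter_upwards [eventually_truncate_eq (f x), eventually_truncate_eq (κ Q)] with m hx hQ
        rw [hx, hQ]
    _ ≤ liminf (fun m => ∫⁻ x in Q, ‖truncate m (f x) - truncate m (κ Q)‖ₑ ∂μ) atTop :=
        lintegral_liminf_le' fun m => ((hmeas m).sub_const _).enorm.restrict
    _ ≤ _ := liminf_le_of_frequently_le' <| .of_forall fun m =>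
        setLIntegral_enorm_sub_le_of_bounded h𝓠 hw hr0 hr1 hB (hmeas m)
          (hosc.comp_truncate hr0.le m)
          (fun P _ x => enorm_truncate_sub_truncate_le_two_mul m (f x) (κ P)) hQ

lemma IsA1Weight.hasRpowOscillationLE (h𝓠 : IsCalderonZygmundBasis μ 𝓠 D)
    (hw : IsA1Weight μ 𝓠 w A) (hr0 : 0 < r) (hr1 : r ≤ 1)
    (hosc : ∀ Q ∈ 𝓠, ∫⁻ x in Q, ‖f x - κ Q‖ₑ ^ r * w x ^ (1 - r) ∂μ ≤
      B ^ r * μ.withDensity w Q) :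
    HasRpowOscillationLE μ 𝓠 w r f κ (A ^ ((1 - r) / r) * B) := by
  intro Q hQ
  have hr1' : 0 ≤ 1 - r := sub_nonneg.2 hr1
  have hQ0 := h𝓠.measure_ne_zero Q hQ
  have hQt := h𝓠.measure_ne_top Q hQ
  set a := μ.withDensity w Q / μ Q with ha
  have ha0 : a ≠ 0 := ENNReal.div_ne_zero.2 ⟨hw.measure_ne_zero Q hQ, hQt⟩
  have hat : a ≠ ∞ := ENNReal.div_ne_top (hw.measure_ne_top Q hQ) hQ0
  have hs0 : a ^ (1 - r) ≠ 0 := (ENNReal.rpow_pos ha0.bot_lt hat).ne'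
  have hst : a ^ (1 - r) ≠ ∞ := ENNReal.rpow_ne_top_of_nonneg hr1' hat
  have hasplit : a = a ^ (1 - r) * a ^ r := by
    rw [← ENNReal.rpow_add _ _ ha0 hat, sub_add_cancel, ENNReal.rpow_one]
  have hA : (A : ℝ≥0∞) ^ (1 - r) = (↑(A ^ ((1 - r) / r)) : ℝ≥0∞) ^ r := by
    rw [← ENNReal.coe_rpow_of_nonneg _ hr0.le, ← NNReal.rpow_mul, div_mul_cancel₀ _ hr0.ne',
      ENNReal.coe_rpow_of_nonneg _ hr1']
  rw [← ENNReal.mul_le_mul_iff_right hs0 hst]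
  calc a ^ (1 - r) * ∫⁻ x in Q, ‖f x - κ Q‖ₑ ^ r ∂μ
      = ∫⁻ x in Q, a ^ (1 - r) * ‖f x - κ Q‖ₑ ^ r ∂μ := (lintegral_const_mul' _ _ hst).symm
    _ ≤ ∫⁻ x in Q, A ^ (1 - r) * (‖f x - κ Q‖ₑ ^ r * w x ^ (1 - r)) ∂μ := by
        refine lintegral_mono_ae ((hw.ae_le Q hQ).mono fun x hx => ?_)
        calc a ^ (1 - r) * ‖f x - κ Q‖ₑ ^ r ≤ (A * w x) ^ (1 - r) * ‖f x - κ Q‖ₑ ^ r := by gcongr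
          _ = _ := by rw [ENNReal.mul_rpow_of_nonneg _ _ hr1']; ring
    _ ≤ A ^ (1 - r) * (B ^ r * (a * μ Q)) := by
        rw [lintegral_const_mul' _ _ (ENNReal.rpow_ne_top_of_nonneg hr1' ENNReal.coe_ne_top), ha,
          ENNReal.div_mul_cancel hQ0 hQt]
        gcongr
        exact hosc Q hQ
    _ = a ^ (1 - r) * ((↑(A ^ ((1 - r) / r) * B) * a) ^ r * μ Q) := by
        rw [ENNReal.coe_mul, ENNReal.mul_rpow_of_nonneg _ _ hr0.le,
          ENNReal.mul_rpow_of_nonneg _ _ hr0.le, ← hA]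
        nth_rewrite 1 [hasplit]
        ring

theorem IsA1Weight.setLIntegral_enorm_sub_le (h𝓠 : IsCalderonZygmundBasis μ 𝓠 D)
    (hw : IsA1Weight μ 𝓠 w A) (hr0 : 0 < r) (hr1 : r ≤ 1) (hB : B ≠ 0) (hf : AEMeasurable f μ)
    (hosc : ∀ Q ∈ 𝓠, ∫⁻ x in Q, ‖f x - κ Q‖ₑ ^ r * w x ^ (1 - r) ∂μ ≤
      B ^ r * μ.withDensity w Q) (hQ : Q ∈ 𝓠) :
    ∫⁻ x in Q, ‖f x - κ Q‖ₑ ∂μ ≤ ↑(4 * (A * (2 * D + 2)) ^ r⁻¹ * B) * μ.withDensity w Q := by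
  have hA : A ≠ 0 := (one_pos.trans_le (hw.one_le_const h𝓠 hQ)).ne'
  have hA_rpow : A * A ^ ((1 - r) / r) = A ^ r⁻¹ := by
    have hexp : 1 + (1 - r) / r = r⁻¹ := by field_simp; ring
    rw [← NNReal.rpow_one_add' (by rw [hexp]; positivity), hexp]
  refine ((hw.hasRpowOscillationLE h𝓠 hr0 hr1 hosc).setLIntegral_enorm_sub_le h𝓠 hw hr0 hr1
    (mul_ne_zero (NNReal.rpow_pos hA.bot_lt).ne' hB) hf hQ).trans_eq ?_
  rw [NNReal.mul_rpow, ← hA_rpow]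
  push_cast [ENNReal.coe_rpow_of_nonneg _ (inv_nonneg.2 hr0.le)]
  ring


lemma enorm_sub_setAverage_mul_measure_le (hQt : μ Q ≠ ∞) (hf : IntegrableOn f Q μ) (k : ℝ) :
    ‖k - ⨍ x in Q, f x ∂μ‖ₑ * μ Q ≤ ∫⁻ x in Q, ‖f x - k‖ₑ ∂μ := by
  have hmean : (k - ⨍ x in Q, f x ∂μ) * μ.real Q = ∫ x in Q, (k - f x) ∂μ := by
    rw [integral_sub (integrableOn_const hQt).integrable hf, setIntegral_const,
      ← measure_smul_setAverage f hQt, smul_eq_mul, smul_eq_mul]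
    ring
  calc ‖k - ⨍ x in Q, f x ∂μ‖ₑ * μ Q = ‖∫ x in Q, (k - f x) ∂μ‖ₑ := by
        rw [← hmean, enorm_mul, Real.enorm_of_nonneg measureReal_nonneg, ofReal_measureReal hQt]
    _ ≤ ∫⁻ x in Q, ‖k - f x‖ₑ ∂μ := enorm_integral_le_lintegral_enorm _
    _ = ∫⁻ x in Q, ‖f x - k‖ₑ ∂μ := by simp only [enorm_sub_rev]

lemma lintegral_rpow_one_sub_le (hr0 : 0 ≤ r) (hr1 : r ≤ 1) (hw : AEMeasurable w μ) :
    ∫⁻ x, w x ^ (1 - r) ∂μ ≤ (∫⁻ x, w x ∂μ) ^ (1 - r) * μ Set.univ ^ r := by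
  simpa only [ENNReal.one_rpow, mul_one, lintegral_one] using
    ENNReal.lintegral_mul_norm_pow_le hw aemeasurable_const (g := fun _ => 1) (sub_nonneg.2 hr1) hr0
      (sub_add_cancel 1 r)

lemma rpow_mul_lintegral_rpow_one_sub_le (hr0 : 0 ≤ r) (hr1 : r ≤ 1) (hw : AEMeasurable w μ)
    {k M : ℝ≥0∞} (h : k * μ Set.univ ≤ M * ∫⁻ x, w x ∂μ) :
    k ^ r * ∫⁻ x, w x ^ (1 - r) ∂μ ≤ M ^ r * ∫⁻ x, w x ∂μ := by
  set W := ∫⁻ x, w x ∂μ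
  calc k ^ r * ∫⁻ x, w x ^ (1 - r) ∂μ
      ≤ k ^ r * (W ^ (1 - r) * μ Set.univ ^ r) := by
        gcongr
        exact lintegral_rpow_one_sub_le hr0 hr1 hw
    _ = (k * μ Set.univ) ^ r * W ^ (1 - r) := by
        rw [ENNReal.mul_rpow_of_nonneg _ _ hr0]; ring
    _ ≤ (M * W) ^ r * W ^ (1 - r) := by gcongr
    _ = M ^ r * W := by
        rw [ENNReal.mul_rpow_of_nonneg _ _ hr0, mul_assoc,
          ← ENNReal.rpow_add_of_nonneg _ _ hr0 (sub_nonneg.2 hr1), add_sub_cancel,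
          ENNReal.rpow_one]

theorem IsA1Weight.setLIntegral_enorm_sub_setAverage_rpow_mul_le
    (h𝓠 : IsCalderonZygmundBasis μ 𝓠 D) (hw : IsA1Weight μ 𝓠 w A) (hr0 : 0 < r) (hr1 : r ≤ 1)
    (hB : B ≠ 0) (hf : AEMeasurable f μ)
    (hosc : ∀ Q ∈ 𝓠, ∫⁻ x in Q, ‖f x - κ Q‖ₑ ^ r * w x ^ (1 - r) ∂μ ≤
      B ^ r * μ.withDensity w Q) (hQ : Q ∈ 𝓠) (hfQ : IntegrableOn f Q μ) :
    ∫⁻ x in Q, ‖f x - ⨍ y in Q, f y ∂μ‖ₑ ^ r * w x ^ (1 - r) ∂μ ≤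
      ↑(1 + 4 ^ r * (A * (2 * D + 2))) * (B ^ r * μ.withDensity w Q) := by
  set m := ⨍ y in Q, f y ∂μ
  set W := μ.withDensity w Q with hW
  set C : ℝ≥0 := 4 * (A * (2 * D + 2)) ^ r⁻¹ with hC
  have hwQ : AEMeasurable w (μ.restrict Q) := hw.aemeasurable.restrict
  have hmean : ‖κ Q - m‖ₑ * μ Q ≤ C * B * W := by
    refine (enorm_sub_setAverage_mul_measure_le (h𝓠.measure_ne_top Q hQ) hfQ (κ Q)).trans ?_
    exact_mod_cast hw.setLIntegral_enorm_sub_le h𝓠 hr0 hr1 hB hf hosc hQ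
  have hconst : ‖κ Q - m‖ₑ ^ r * ∫⁻ x in Q, w x ^ (1 - r) ∂μ ≤ C ^ r * (B ^ r * W) := by
    rw [← mul_assoc, ← ENNReal.mul_rpow_of_nonneg _ _ hr0.le]
    rw [hW, withDensity_apply _ (h𝓠.measurableSet Q hQ)] at hmean ⊢
    rw [← Measure.restrict_apply_univ Q] at hmean
    exact rpow_mul_lintegral_rpow_one_sub_le hr0.le hr1 hwQ hmean
  have hC_rpow : C ^ r = 4 ^ r * (A * (2 * D + 2)) := by
    rw [hC, NNReal.mul_rpow, NNReal.rpow_inv_rpow hr0.ne']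
  calc ∫⁻ x in Q, ‖f x - m‖ₑ ^ r * w x ^ (1 - r) ∂μ
      ≤ ∫⁻ x in Q, (‖f x - κ Q‖ₑ ^ r * w x ^ (1 - r) + ‖κ Q - m‖ₑ ^ r * w x ^ (1 - r)) ∂μ := by
        refine lintegral_mono fun x => ?_
        rw [← add_mul, ← sub_add_sub_cancel (f x) (κ Q) m]
        gcongr
        exact (ENNReal.rpow_le_rpow (enorm_add_le _ _) hr0.le).trans
          (ENNReal.rpow_add_le_add_rpow _ _ hr0.le hr1)
    _ = ∫⁻ x in Q, ‖f x - κ Q‖ₑ ^ r * w x ^ (1 - r) ∂μ +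
          ‖κ Q - m‖ₑ ^ r * ∫⁻ x in Q, w x ^ (1 - r) ∂μ := by
        rw [lintegral_add_right' _ ((hwQ.pow_const _).const_mul _),
          lintegral_const_mul'' _ (hwQ.pow_const _)]
    _ ≤ B ^ r * W + C ^ r * (B ^ r * W) := add_le_add (hosc Q hQ) hconst
    _ = ↑(1 + 4 ^ r * (A * (2 * D + 2))) * (B ^ r * W) := by
        rw [← hC_rpow, ENNReal.coe_add, ENNReal.coe_rpow_of_nonneg _ hr0.le, ENNReal.coe_one]
        ring

end SelfImprovement

section CalderonZygmund

open scoped ENNReal NNReal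
open Filter Topology Metric

lemma ae_le_of_forall_setLIntegral_closedBall_le {E : Type*} [PseudoMetricSpace E]
    [SecondCountableTopology E] [MeasurableSpace E] [BorelSpace E] (μ : Measure E)
    [IsUnifLocDoublingMeasure μ] [IsLocallyFiniteMeasure μ] {h : E → ℝ≥0∞} (hh : AEMeasurable h μ)
    {Q : Set E} (hQ : MeasurableSet Q) (hfin : ∫⁻ x in Q, h x ∂μ ≠ ∞) (L : ℝ≥0∞) {t : ℕ → ℝ}
    (ht : Tendsto t atTop (𝓝[>] 0)) :
    ∀ᵐ x ∂μ, x ∈ Q → ∀ z : ℕ → E, (∀ m, x ∈ closedBall (z m) (t m)) →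
      (∀ m, ∫⁻ y in closedBall (z m) (t m), h y ∂μ ≤ L * μ (closedBall (z m) (t m))) → h x ≤ L := by
  have hleb := (IsUnifLocDoublingMeasure.vitaliFamily μ 1).ae_tendsto_lintegral_div
    (hh.indicator hQ) (by rwa [lintegral_indicator hQ])
  filter_upwards [hleb] with x hx hxQ z hz hle
  have hlim := hx.comp (IsUnifLocDoublingMeasure.tendsto_closedBall_filterAt μ z t ht
    (.of_forall fun m => by rw [one_mul]; exact hz m))
  rw [Set.indicator_of_mem hxQ] at hlim
  exact le_of_tendsto hlim <| .of_forall fun m => ENNReal.div_le_of_le_mul <|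
    (lintegral_mono (Set.indicator_le_self Q h)).trans (hle m)

section Grid

variable {ι : Type*} {a x y : ι → ℝ} {t : ℝ}

/-- The cell containing `x` of the partition of `ι → ℝ` into half-open cubes of side `2 * t`,
one of which has lower corner `a`. As for closed balls, `t` is half of the side. -/
def gridCell (a : ι → ℝ) (t : ℝ) (x : ι → ℝ) : Set (ι → ℝ) :=
  {y | ∀ i, ⌊(y i - a i) / (2 * t)⌋ = ⌊(x i - a i) / (2 * t)⌋}

/-- The centre of `gridCell a t x`. -/
def gridCenter (a : ι → ℝ) (t : ℝ) (x : ι → ℝ) : ι → ℝ :=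
  fun i => a i + (2 * ⌊(x i - a i) / (2 * t)⌋ + 1) * t

lemma mem_gridCell_self : x ∈ gridCell a t x := fun _ => rfl

lemma gridCell_eq_of_mem (hy : y ∈ gridCell a t x) : gridCell a t y = gridCell a t x := by
  ext z
  exact forall_congr' fun i => by rw [hy i]

lemma gridCell_subset_gridCell_natCast_mul (k : ℕ) : gridCell a t x ⊆ gridCell a (k * t) x := by
  intro y hy i
  have hfloor (z : ℝ) : ⌊(z - a i) / (2 * (k * t))⌋ = ⌊(z - a i) / (2 * t)⌋ / k := by
    rw [← Int.floor_div_natCast, div_div, mul_left_comm, mul_comm]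
  rw [hfloor, hfloor, hy i]

lemma countable_range_gridCell [Finite ι] : (Set.range (gridCell a t)).Countable := by
  let cellOfIndex (k : ι → ℤ) : Set (ι → ℝ) := {y | ∀ i, ⌊(y i - a i) / (2 * t)⌋ = k i}
  refine (Set.countable_range cellOfIndex).mono ?_
  rintro _ ⟨x, rfl⟩
  exact ⟨fun i => ⌊(x i - a i) / (2 * t)⌋, rfl⟩

lemma gridCell_eq_pi_Ico (ht : 0 < t) :
    gridCell a t x =
      Set.univ.pi fun i => Set.Ico (gridCenter a t x i - t) (gridCenter a t x i + t) := by
  ext y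
  refine Iff.trans (forall_congr' fun i => ?_) Set.mem_univ_pi.symm
  rw [Int.floor_eq_iff, le_div_iff₀ (by positivity), div_lt_iff₀ (by positivity), Set.mem_Ico,
    gridCenter]
  constructor <;> rintro ⟨h₁, h₂⟩ <;> constructor <;> linarith

variable [Fintype ι]

lemma closedBall_pi_eq_pi_Icc (c : ι → ℝ) (ht : 0 ≤ t) :
    closedBall c t = Set.univ.pi fun i => Set.Icc (c i - t) (c i + t) := by
  simp only [closedBall_pi _ ht, Real.closedBall_eq_Icc]

lemma gridCell_ae_eq_closedBall (ht : 0 < t) :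
    gridCell a t x =ᵐ[volume] closedBall (gridCenter a t x) t := by
  rw [gridCell_eq_pi_Ico ht, closedBall_pi_eq_pi_Icc _ ht.le, Set.pi_univ_Icc]
  exact Measure.univ_pi_Ico_ae_eq_Icc

lemma closure_gridCell (ht : 0 < t) :
    closure (gridCell a t x) = closedBall (gridCenter a t x) t := by
  rw [gridCell_eq_pi_Ico ht, closedBall_pi_eq_pi_Icc _ ht.le, closure_pi_set]
  exact Set.pi_congr rfl fun i _ => closure_Ico (by linarith)

lemma closure_gridCell_ae_eq (ht : 0 < t) : closure (gridCell a t x) =ᵐ[volume] gridCell a t x := by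
  rw [closure_gridCell ht]
  exact (gridCell_ae_eq_closedBall ht).symm

lemma volume_gridCell (ht : 0 < t) :
    volume (gridCell a t x) = ENNReal.ofReal (2 * t) ^ Fintype.card ι := by
  rw [measure_congr (gridCell_ae_eq_closedBall ht), Real.volume_pi_closedBall _ ht.le,
    ENNReal.ofReal_pow (by positivity)]

end Grid

section Dyadic

variable {ι : Type*} {c x y : ι → ℝ} {s : ℝ} {m j : ℕ}

/-- The cell containing `x` of the `m`-th dyadic subdivision of the cube `closedBall c s`. -/
def dyadicCell (c : ι → ℝ) (s : ℝ) (m : ℕ) (x : ι → ℝ) : Set (ι → ℝ) :=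
  gridCell (fun i => c i - s) (s / 2 ^ m) x

lemma dyadicCell_anti (hjm : j ≤ m) : dyadicCell c s m x ⊆ dyadicCell c s j x := by
  obtain ⟨d, rfl⟩ := Nat.exists_eq_add_of_le hjm
  have hside : s / 2 ^ j = (2 ^ d : ℕ) * (s / 2 ^ (j + d)) := by
    push_cast
    rw [pow_add]
    field_simp
  rw [dyadicCell, dyadicCell, hside]
  exact gridCell_subset_gridCell_natCast_mul _

lemma dyadicCell_eq_of_mem (hjm : j ≤ m) (hy : y ∈ dyadicCell c s m x) :
    dyadicCell c s j y = dyadicCell c s j x :=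
  gridCell_eq_of_mem (dyadicCell_anti hjm hy)

variable [Fintype ι]

lemma closure_dyadicCell_zero (hs : 0 < s) : closure (dyadicCell c s 0 c) = closedBall c s := by
  rw [dyadicCell, pow_zero, div_one, closure_gridCell hs]
  congr 1
  ext i
  have hfloor : ⌊(c i - (c i - s)) / (2 * s)⌋ = 0 := by
    rw [Int.floor_eq_zero_iff, sub_sub_cancel, div_mul_cancel_right₀ hs.ne']
    norm_num
  rw [gridCenter, hfloor]
  ring

lemma closure_dyadicCell_ae_eq (hs : 0 < s) :
    closure (dyadicCell c s m x) =ᵐ[volume] dyadicCell c s m x :=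
  closure_gridCell_ae_eq (by positivity)

lemma dyadicCell_zero_ae_eq_closedBall (hs : 0 < s) (hx : x ∈ dyadicCell c s 0 c) :
    dyadicCell c s 0 x =ᵐ[volume] closedBall c s := by
  rw [dyadicCell_eq_of_mem le_rfl hx, ← closure_dyadicCell_zero hs]
  exact (closure_dyadicCell_ae_eq hs).symm

lemma volume_dyadicCell_eq_two_pow_mul (hs : 0 < s) (m : ℕ) :
    volume (dyadicCell c s m x) = 2 ^ Fintype.card ι * volume (dyadicCell c s (m + 1) y) := by
  rw [dyadicCell, dyadicCell, volume_gridCell (by positivity), volume_gridCell (by positivity),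
    ← mul_pow, ← ENNReal.ofReal_ofNat, ← ENNReal.ofReal_mul zero_le_two]
  congr 2
  rw [pow_succ]
  field_simp

/-- The dyadic cell of level `m` around `x` is selected by the Calderón–Zygmund stopping time: it is
the largest dyadic cell around `x` on which the average of `h` exceeds `L`. -/
structure IsStoppingCell (h : (ι → ℝ) → ℝ≥0∞) (L : ℝ≥0∞) (c : ι → ℝ) (s : ℝ) (m : ℕ)
    (x : ι → ℝ) : Prop where
  mem_dyadicCell_zero : x ∈ dyadicCell c s 0 c
  mul_volume_lt : L * volume (dyadicCell c s m x) < ∫⁻ y in dyadicCell c s m x, h y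
  lintegral_le : ∀ j < m, ∫⁻ y in dyadicCell c s j x, h y ≤ L * volume (dyadicCell c s j x)

/-- The closures of the cells selected by the Calderón–Zygmund stopping time. -/
def stoppingCubes (h : (ι → ℝ) → ℝ≥0∞) (L : ℝ≥0∞) (c : ι → ℝ) (s : ℝ) : Set (Set (ι → ℝ)) :=
  {P | ∃ m x, IsStoppingCell h L c s m x ∧ closure (dyadicCell c s m x) = P}

lemma countable_stoppingCubes (h : (ι → ℝ) → ℝ≥0∞) (L : ℝ≥0∞) (c : ι → ℝ) (s : ℝ) :
    (stoppingCubes h L c s).Countable := by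
  refine (Set.countable_iUnion fun m => (countable_range_gridCell (a := fun i => c i - s)
    (t := s / 2 ^ m)).image closure).mono ?_
  rintro _ ⟨m, x, -, rfl⟩
  exact Set.mem_iUnion.2 ⟨m, _, ⟨x, rfl⟩, rfl⟩

variable {h : (ι → ℝ) → ℝ≥0∞} {L : ℝ≥0∞} {m' : ℕ} {x' : ι → ℝ}

namespace IsStoppingCell

lemma of_mem (hx : IsStoppingCell h L c s m x) (hy : y ∈ dyadicCell c s m x) :
    IsStoppingCell h L c s m y where
  mem_dyadicCell_zero := by
    rw [← dyadicCell_eq_of_mem le_rfl hx.mem_dyadicCell_zero]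
    exact dyadicCell_anti m.zero_le hy
  mul_volume_lt := by
    rw [dyadicCell_eq_of_mem le_rfl hy]
    exact hx.mul_volume_lt
  lintegral_le j hj := by
    rw [dyadicCell_eq_of_mem hj.le hy]
    exact hx.lintegral_le j hj

lemma level_le (hx : IsStoppingCell h L c s m x) (hx' : IsStoppingCell h L c s m' x) : m ≤ m' :=
  le_of_not_gt fun hlt => (hx.lintegral_le m' hlt).not_gt hx'.mul_volume_lt

lemma disjoint_of_ne (hx : IsStoppingCell h L c s m x) (hx' : IsStoppingCell h L c s m' x')
    (hne : dyadicCell c s m x ≠ dyadicCell c s m' x') :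
    Disjoint (dyadicCell c s m x) (dyadicCell c s m' x') := by
  refine Set.disjoint_left.2 fun y hy hy' => hne ?_
  obtain rfl : m = m' :=
    ((hx.of_mem hy).level_le (hx'.of_mem hy')).antisymm ((hx'.of_mem hy').level_le (hx.of_mem hy))
  rw [← dyadicCell_eq_of_mem le_rfl hy, dyadicCell_eq_of_mem le_rfl hy']

lemma closure_subset (hs : 0 < s) (hx : IsStoppingCell h L c s m x) :
    closure (dyadicCell c s m x) ⊆ closedBall c s := by
  rw [← closure_dyadicCell_zero hs]
  exact closure_mono fun y hy => (hx.of_mem hy).mem_dyadicCell_zero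

lemma setLIntegral_le (hs : 0 < s)
    (hQ : ∫⁻ y in closedBall c s, h y ≤ L * volume (closedBall c s))
    (hx : IsStoppingCell h L c s m x) :
    ∫⁻ y in dyadicCell c s m x, h y ≤
      2 ^ Fintype.card ι * (L * volume (dyadicCell c s m x)) := by
  cases m with
  | zero =>
    have hbase := dyadicCell_zero_ae_eq_closedBall hs hx.mem_dyadicCell_zero
    have hlt := hx.mul_volume_lt
    rw [setLIntegral_congr hbase, measure_congr hbase] at hlt
    exact absurd hQ hlt.not_ge
  | succ m =>
    calc ∫⁻ y in dyadicCell c s (m + 1) x, h y ≤ ∫⁻ y in dyadicCell c s m x, h y :=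
          lintegral_mono_set (dyadicCell_anti m.le_succ)
      _ ≤ L * volume (dyadicCell c s m x) := hx.lintegral_le m m.lt_succ_self
      _ = 2 ^ Fintype.card ι * (L * volume (dyadicCell c s (m + 1) x)) := by
          rw [volume_dyadicCell_eq_two_pow_mul hs m, mul_left_comm]

end IsStoppingCell

lemma measurableSet_sUnion_stoppingCubes :
    MeasurableSet (⋃₀ stoppingCubes h L c s) :=
  .sUnion (countable_stoppingCubes h L c s) fun _ ⟨_, _, _, hP⟩ =>
    hP ▸ isClosed_closure.measurableSet

lemma pairwise_aedisjoint_stoppingCubes (hs : 0 < s) :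
    (stoppingCubes h L c s).Pairwise (AEDisjoint volume) := by
  rintro _ ⟨m, x, hx, rfl⟩ _ ⟨m', x', hx', rfl⟩ hne
  exact (hx.disjoint_of_ne hx' fun heq => hne (congrArg closure heq)).aedisjoint.congr
    (closure_dyadicCell_ae_eq hs) (closure_dyadicCell_ae_eq hs)

lemma setLIntegral_dyadicCell_le_of_notMem_stoppingCubes (hx : x ∈ dyadicCell c s 0 c)
    (hxS : x ∉ ⋃₀ stoppingCubes h L c s) (m : ℕ) :
    ∫⁻ y in dyadicCell c s m x, h y ≤ L * volume (dyadicCell c s m x) := by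
  induction m using Nat.strong_induction_on with
  | _ m ih =>
    by_contra! hlt
    exact hxS ⟨_, ⟨m, x, ⟨hx, hlt, ih⟩, rfl⟩, subset_closure mem_gridCell_self⟩

lemma ae_le_off_stoppingCubes (hs : 0 < s) (hh : AEMeasurable h)
    (hfin : ∫⁻ y in closedBall c s, h y ≠ ∞) :
    ∀ᵐ x ∂volume.restrict (closedBall c s \ ⋃₀ stoppingCubes h L c s), h x ≤ L := by
  have hlim : Tendsto (fun m : ℕ => s / 2 ^ m) atTop (𝓝[>] 0) :=
    tendsto_nhdsWithin_iff.2 ⟨tendsto_const_nhds.div_atTop (tendsto_pow_atTop_atTop_of_one_lt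
      one_lt_two), .of_forall fun m => Set.mem_Ioi.2 (by positivity)⟩
  rw [ae_restrict_iff' (measurableSet_closedBall.diff measurableSet_sUnion_stoppingCubes)]
  filter_upwards [ae_le_of_forall_setLIntegral_closedBall_le volume hh measurableSet_closedBall
    hfin L hlim, (dyadicCell_zero_ae_eq_closedBall hs mem_gridCell_self).mem_iff]
    with x hx hxbase ⟨hxQ, hxS⟩
  refine hx hxQ (fun m => gridCenter (fun i => c i - s) (s / 2 ^ m) x) (fun m => ?_) fun m => ?_
  · rw [← closure_gridCell (by positivity)]
    exact subset_closure mem_gridCell_self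
  · have hcell : dyadicCell c s m x =ᵐ[volume] _ := gridCell_ae_eq_closedBall (by positivity)
    rw [← setLIntegral_congr hcell, ← measure_congr hcell]
    exact setLIntegral_dyadicCell_le_of_notMem_stoppingCubes (hxbase.2 hxQ) hxS m

theorem isCalderonZygmundFamily_stoppingCubes (hs : 0 < s) (hh : AEMeasurable h)
    (hL : L ≠ ∞) (hQ : ∫⁻ y in closedBall c s, h y ≤ L * volume (closedBall c s)) :
    IsCalderonZygmundFamily volume {Q | ∃ (c : ι → ℝ) (s : ℝ), 0 < s ∧ closedBall c s = Q}
      (2 ^ Fintype.card ι) h L (closedBall c s) (stoppingCubes h L c s) where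
  subset_class := by
    rintro _ ⟨m, x, -, rfl⟩
    exact ⟨_, _, by positivity, (closure_gridCell (by positivity)).symm⟩
  countable := countable_stoppingCubes h L c s
  subset := by
    rintro _ ⟨m, x, hx, rfl⟩
    exact hx.closure_subset hs
  pairwise_aedisjoint := pairwise_aedisjoint_stoppingCubes hs
  mul_measure_le := by
    rintro _ ⟨m, x, hx, rfl⟩
    rw [setLIntegral_congr (closure_dyadicCell_ae_eq hs),
      measure_congr (closure_dyadicCell_ae_eq hs)]
    exact hx.mul_volume_lt.le
  lintegral_le := by
    rintro _ ⟨m, x, hx, rfl⟩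
    rw [setLIntegral_congr (closure_dyadicCell_ae_eq hs),
      measure_congr (closure_dyadicCell_ae_eq hs)]
    push_cast
    exact hx.setLIntegral_le hs hQ
  ae_le := ae_le_off_stoppingCubes hs hh
    (ne_top_of_le_ne_top (ENNReal.mul_ne_top hL measure_closedBall_lt_top.ne) hQ)

theorem isCalderonZygmundBasis_closedBall (ι : Type*) [Fintype ι] :
    IsCalderonZygmundBasis volume {Q | ∃ (c : ι → ℝ) (s : ℝ), 0 < s ∧ closedBall c s = Q}
      (2 ^ Fintype.card ι) where
  measurableSet := by
    rintro _ ⟨c, s, -, rfl⟩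
    exact measurableSet_closedBall
  measure_ne_zero := by
    rintro _ ⟨c, s, hs, rfl⟩
    exact (measure_closedBall_pos volume c hs).ne'
  measure_ne_top := by
    rintro _ ⟨c, s, -, rfl⟩
    exact measure_closedBall_lt_top.ne
  exists_family := by
    rintro _ ⟨c, s, hs, rfl⟩ h hh L hL hQ
    exact ⟨_, isCalderonZygmundFamily_stoppingCubes hs hh hL hQ⟩

end Dyadic

end CalderonZygmund

section MixedIntegrals

open scoped ENNReal

variable {X : Type*} [MeasurableSpace X] {μ : Measure X} {g v : X → ℝ} {r : ℝ}

lemma div_rpow_mul_eq {a b : ℝ} (ha : 0 ≤ a) (hb : 0 < b) (r : ℝ) :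
    (a / b) ^ r * b = a ^ r * b ^ (1 - r) := by
  rw [Real.div_rpow ha hb.le, Real.rpow_sub hb, Real.rpow_one, div_mul_eq_mul_div, mul_div_assoc]

lemma integrable_abs_rpow_mul_rpow (hr0 : 0 ≤ r) (hr1 : r ≤ 1) (hg : Integrable g μ)
    (hv : Integrable v μ) (hv0 : ∀ x, 0 ≤ v x) :
    Integrable (fun x => |g x| ^ r * v x ^ (1 - r)) μ := by
  refine ((hg.abs.const_mul r).add (hv.const_mul (1 - r))).mono'
    ((hg.abs.aemeasurable.pow_const r).mul (hv.aemeasurable.pow_const _)).aestronglyMeasurable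
    (.of_forall fun x => ?_)
  have := hv0 x
  rw [Real.norm_of_nonneg (by positivity)]
  exact Real.geom_mean_le_arith_mean2_weighted hr0 (sub_nonneg.2 hr1) (abs_nonneg _) (hv0 x)
    (add_sub_cancel r 1)

lemma ofReal_integral_abs_rpow_mul_rpow (hr0 : 0 ≤ r) (hr1 : r ≤ 1) (hg : Integrable g μ)
    (hv : Integrable v μ) (hv0 : ∀ x, 0 ≤ v x) :
    ENNReal.ofReal (∫ x, |g x| ^ r * v x ^ (1 - r) ∂μ) =
      ∫⁻ x, ‖g x‖ₑ ^ r * ENNReal.ofReal (v x) ^ (1 - r) ∂μ := by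
  have hnonneg (x : X) : 0 ≤ |g x| ^ r * v x ^ (1 - r) := by have := hv0 x; positivity
  rw [ofReal_integral_eq_lintegral_ofReal (integrable_abs_rpow_mul_rpow hr0 hr1 hg hv hv0)
    (.of_forall hnonneg)]
  refine lintegral_congr fun x => ?_
  rw [ENNReal.ofReal_mul (by positivity), Real.enorm_eq_ofReal_abs,
    ENNReal.ofReal_rpow_of_nonneg (abs_nonneg _) hr0,
    ENNReal.ofReal_rpow_of_nonneg (hv0 x) (sub_nonneg.2 hr1)]

end MixedIntegrals

section Cubes

open scoped ENNReal NNReal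
open Metric

variable {n : ℕ} {c : Rn n} {ρ : ℝ} {Q : Set (Rn n)}

/-- The class of all cubes of `Rn n`. -/
def cubes (n : ℕ) : Set (Set (Rn n)) := {Q | ∃ c ρ, 0 < ρ ∧ cube c ρ = Q}

lemma cube_mem_cubes (c : Rn n) (hρ : 0 < ρ) : cube c ρ ∈ cubes n := ⟨c, ρ, hρ, rfl⟩

lemma toLp_preimage_cube (c : Rn n) (hρ : 0 ≤ ρ) :
    MeasurableEquiv.toLp 2 (Fin n → ℝ) ⁻¹' cube c ρ = closedBall (WithLp.ofLp c) (ρ / 2) := by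
  rw [closedBall_pi _ (by positivity)]
  ext x
  simp [cube, Real.dist_eq]

lemma setOf_toLp_preimage_mem_closedBalls_eq_cubes :
    {Q : Set (Rn n) | MeasurableEquiv.toLp 2 (Fin n → ℝ) ⁻¹' Q ∈
      {P | ∃ (c : Fin n → ℝ) (s : ℝ), 0 < s ∧ closedBall c s = P}} = cubes n := by
  ext Q
  constructor
  · rintro ⟨c, s, hs, hQ⟩
    refine ⟨WithLp.toLp 2 c, 2 * s, by positivity, ?_⟩
    apply (MeasurableEquiv.toLp 2 (Fin n → ℝ)).surjective.preimage_injective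
    rw [toLp_preimage_cube _ (by positivity), mul_div_cancel_left₀ _ two_ne_zero, ← hQ]
  · rintro ⟨c, ρ, hρ, rfl⟩
    exact ⟨WithLp.ofLp c, ρ / 2, by positivity, (toLp_preimage_cube c hρ.le).symm⟩

lemma isCalderonZygmundBasis_cubes (n : ℕ) :
    IsCalderonZygmundBasis volume (cubes n) (2 ^ n) := by
  have h := (isCalderonZygmundBasis_closedBall (Fin n)).of_measurePreserving
    (MeasurableEquiv.toLp 2 (Fin n → ℝ)) (PiLp.volume_preserving_toLp (Fin n))
  rwa [setOf_toLp_preimage_mem_closedBalls_eq_cubes, Fintype.card_fin] at h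

lemma isCompact_cube (c : Rn n) (hρ : 0 ≤ ρ) : IsCompact (cube c ρ) := by
  have hcompact := (isCompact_closedBall (WithLp.ofLp c) (ρ / 2)).image
    (PiLp.continuous_toLp 2 fun _ : Fin n => ℝ)
  rwa [← toLp_preimage_cube c hρ, MeasurableEquiv.coe_toLp,
    Set.image_preimage_eq _ (WithLp.toLp_surjective 2)] at hcompact

lemma volume_cube (c : Rn n) (hρ : 0 ≤ ρ) : volume (cube c ρ) = ENNReal.ofReal (ρ ^ n) := by
  have he : MeasurePreserving (MeasurableEquiv.toLp 2 (Fin n → ℝ)) volume volume :=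
    PiLp.volume_preserving_toLp (Fin n)
  rw [← he.measure_preimage_equiv, toLp_preimage_cube c hρ,
    Real.volume_pi_closedBall _ (by positivity), Fintype.card_fin, mul_div_cancel₀ _ two_ne_zero]

lemma avg_eq_setAverage (f : Rn n → ℝ) (c : Rn n) (hρ : 0 ≤ ρ) :
    avg f c ρ = ⨍ x in cube c ρ, f x := by
  rw [setAverage_eq, measureReal_def, volume_cube c hρ, ENNReal.toReal_ofReal (by positivity),
    smul_eq_mul, avg, div_eq_inv_mul]

lemma integrableOn_of_mem_cubes {g : Rn n → ℝ} (hg : LocallyIntegrable g volume)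
    (hQ : Q ∈ cubes n) : IntegrableOn g Q := by
  obtain ⟨c, ρ, hρ, rfl⟩ := hQ
  exact hg.integrableOn_isCompact (isCompact_cube c hρ.le)

end Cubes

section Oscillation

open scoped ENNReal NNReal Topology
open Filter

variable {n : ℕ} {ω f : Rn n → ℝ} {Q : Set (Rn n)} {r A : ℝ}

lemma wMeas_pos (hω0 : ∀ x, 0 < ω x) (hω : LocallyIntegrable ω volume) (hQ : Q ∈ cubes n) :
    0 < wMeas ω Q := by
  rw [wMeas, setIntegral_pos_iff_support_of_nonneg_ae (.of_forall fun x => (hω0 x).le)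
    (integrableOn_of_mem_cubes hω hQ), Function.support_eq_univ fun x => (hω0 x).ne',
    Set.univ_inter]
  exact ((isCalderonZygmundBasis_cubes n).measure_ne_zero Q hQ).bot_lt

lemma withDensity_ofReal_eq (hω0 : ∀ x, 0 < ω x) (hω : LocallyIntegrable ω volume)
    (hQ : Q ∈ cubes n) :
    volume.withDensity (fun x => ENNReal.ofReal (ω x)) Q = ENNReal.ofReal (wMeas ω Q) := by
  rw [withDensity_apply _ ((isCalderonZygmundBasis_cubes n).measurableSet Q hQ), wMeas,
    ofReal_integral_eq_lintegral_ofReal (integrableOn_of_mem_cubes hω hQ)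
      (.of_forall fun x => (hω0 x).le)]

lemma IsA1.isA1Weight (hω : IsA1 ω A) :
    IsA1Weight volume (cubes n) (fun x => ENNReal.ofReal (ω x)) A.toNNReal := by
  obtain ⟨hω0, hωint, hA1, hωA⟩ := hω
  refine ⟨hωint.aestronglyMeasurable.aemeasurable.ennreal_ofReal, fun Q hQ => ?_, fun Q hQ => ?_,
    fun Q hQ => ?_⟩ <;> rw [withDensity_ofReal_eq hω0 hωint hQ]
  · exact (ENNReal.ofReal_pos.2 (wMeas_pos hω0 hωint hQ)).ne'
  · exact ENNReal.ofReal_ne_top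
  · rw [ae_restrict_iff' ((isCalderonZygmundBasis_cubes n).measurableSet Q hQ)]
    obtain ⟨c, ρ, hρ, rfl⟩ := hQ
    filter_upwards [hωA c ρ hρ] with x hx hxQ
    rw [volume_cube c hρ.le, ← ENNReal.ofReal_div_of_pos (by positivity), ← ENNReal.ofReal,
      ← ENNReal.ofReal_mul (zero_le_one.trans hA1)]
    exact ENNReal.ofReal_le_ofReal (hx hxQ)

/-- The weighted `L^r` oscillation of `f` around the constant `k` on `Q`. The `BMO^r(ω)` norm of
`f` is its supremum over cubes `Q` with `k = f_Q`, and the `BMO_r(ω)` norm is the supremum over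
cubes of its infimum over `k`. -/
def weightedOscillation (ω f : Rn n → ℝ) (r : ℝ) (Q : Set (Rn n)) (k : ℝ) : ℝ :=
  ((wMeas ω Q)⁻¹ * ∫ x in Q, |f x - k| ^ r * ω x ^ (1 - r)) ^ (1 / r)

lemma weightedOscillation_nonneg (hω0 : ∀ x, 0 ≤ ω x) (f : Rn n → ℝ) (r : ℝ) (Q : Set (Rn n))
    (k : ℝ) : 0 ≤ weightedOscillation ω f r Q k := by
  have hint : 0 ≤ ∫ x in Q, |f x - k| ^ r * ω x ^ (1 - r) :=
    integral_nonneg fun x => mul_nonneg (by positivity) (Real.rpow_nonneg (hω0 x) _)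
  have hwMeas : 0 ≤ wMeas ω Q := integral_nonneg hω0
  exact Real.rpow_nonneg (by positivity) _

lemma weightedOscillation_le_iff (hr0 : 0 < r) (hr1 : r ≤ 1) (hω0 : ∀ x, 0 < ω x)
    (hω : LocallyIntegrable ω volume) (hf : LocallyIntegrable f volume) (hQ : Q ∈ cubes n)
    {k : ℝ} {N : ℝ≥0} :
    weightedOscillation ω f r Q k ≤ N ↔
      ∫⁻ x in Q, ‖f x - k‖ₑ ^ r * ENNReal.ofReal (ω x) ^ (1 - r) ≤
        N ^ r * volume.withDensity (fun x => ENNReal.ofReal (ω x)) Q := by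
  have hW := wMeas_pos hω0 hω hQ
  have hQt := (isCalderonZygmundBasis_cubes n).measure_ne_top Q hQ
  have hω0' (x : Rn n) : 0 ≤ ω x := (hω0 x).le
  have hint : 0 ≤ ∫ x in Q, |f x - k| ^ r * ω x ^ (1 - r) :=
    integral_nonneg fun x => mul_nonneg (by positivity) (Real.rpow_nonneg (hω0' x) _)
  have hfk : IntegrableOn (fun x => f x - k) Q :=
    (integrableOn_of_mem_cubes hf hQ).sub (integrableOn_const hQt)
  rw [weightedOscillation, one_div, Real.rpow_inv_le_iff_of_pos (by positivity) N.coe_nonneg hr0,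
    inv_mul_le_iff₀ hW, mul_comm, withDensity_ofReal_eq hω0 hω hQ,
    ← ofReal_integral_abs_rpow_mul_rpow hr0.le hr1 hfk (integrableOn_of_mem_cubes hω hQ) hω0',
    ← ENNReal.coe_rpow_of_nonneg _ hr0.le, ← ENNReal.ofReal_coe_nnreal,
    ← ENNReal.ofReal_mul (by positivity), ENNReal.ofReal_le_ofReal_iff (by positivity),
    NNReal.coe_rpow]

theorem weightedOscillation_setAverage_le (hr0 : 0 < r) (hr1 : r ≤ 1) (hω : IsA1 ω A)
    (hf : LocallyIntegrable f volume) {N : ℝ≥0} (hN : N ≠ 0) {κ : Set (Rn n) → ℝ}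
    (hκ : ∀ Q ∈ cubes n, weightedOscillation ω f r Q (κ Q) ≤ N) (hQ : Q ∈ cubes n) :
    weightedOscillation ω f r Q (⨍ x in Q, f x) ≤
      ↑((1 + 4 ^ r * (A.toNNReal * (2 * 2 ^ n + 2))) ^ r⁻¹ : ℝ≥0) * N := by
  obtain ⟨hω0, hωint, -, -⟩ := id hω
  rw [← NNReal.coe_mul, weightedOscillation_le_iff hr0 hr1 hω0 hωint hf hQ]
  refine (hω.isA1Weight.setLIntegral_enorm_sub_setAverage_rpow_mul_le
    (isCalderonZygmundBasis_cubes n) hr0 hr1 hN hf.aestronglyMeasurable.aemeasurable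
    (fun Q hQ => (weightedOscillation_le_iff hr0 hr1 hω0 hωint hf hQ).1 (hκ Q hQ)) hQ
    (integrableOn_of_mem_cubes hf hQ)).trans_eq ?_
  rw [ENNReal.coe_mul, ENNReal.mul_rpow_of_nonneg _ _ hr0.le,
    ← ENNReal.coe_rpow_of_nonneg (_ ^ r⁻¹) hr0.le, NNReal.rpow_inv_rpow hr0.ne', mul_assoc]

theorem weightedOscillation_setAverage_le_of_iInf_le (hr0 : 0 < r) (hr1 : r ≤ 1) (hω : IsA1 ω A)
    (hf : LocallyIntegrable f volume) {N : ℝ≥0}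
    (hN : ∀ Q ∈ cubes n, ⨅ k, weightedOscillation ω f r Q k ≤ N) (hQ : Q ∈ cubes n) :
    weightedOscillation ω f r Q (⨍ x in Q, f x) ≤
      ↑((1 + 4 ^ r * (A.toNNReal * (2 * 2 ^ n + 2))) ^ r⁻¹ : ℝ≥0) * N := by
  set C : ℝ≥0 := (1 + 4 ^ r * (A.toNNReal * (2 * 2 ^ n + 2))) ^ r⁻¹
  have hlim : Tendsto (fun N' : ℝ≥0 => (C * N' : ℝ)) (𝓝[>] N) (𝓝 (C * N)) :=
    ((continuous_const.mul NNReal.continuous_coe).tendsto N).mono_left nhdsWithin_le_nhds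
  refine ge_of_tendsto hlim ?_
  filter_upwards [self_mem_nhdsWithin] with N' hN'
  have hnear (Q : Set (Rn n)) (hQ : Q ∈ cubes n) : ∃ k, weightedOscillation ω f r Q k ≤ N' :=
    (exists_lt_of_ciInf_lt ((hN Q hQ).trans_lt (NNReal.coe_lt_coe.2 hN'))).imp fun _ => le_of_lt
  choose! κ hκ using hnear
  exact weightedOscillation_setAverage_le hr0 hr1 hω hf (pos_of_gt hN').ne' hκ hQ

end Oscillation

theorem stmt2_general (n : ℕ) (r A : ℝ) (hr0 : 0 < r) (hr1 : r ≤ 1) :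
    ∃ C : ℝ, 1 ≤ C ∧
      ∀ (ω f : Rn n → ℝ), IsA1 ω A → LocallyIntegrable f volume →
        ((∀ (c : Rn n) (ρ : ℝ), 0 < ρ →
            (⨅ k : ℝ, ((wMeas ω (cube c ρ))⁻¹ *
              ∫ x in cube c ρ, (|f x - k| / ω x) ^ r * ω x) ^ (1 / r)) ≤
            ((wMeas ω (cube c ρ))⁻¹ *
              ∫ x in cube c ρ, |f x - avg f c ρ| ^ r * ω x ^ (1 - r)) ^ (1 / r)) ∧
        (∀ N : ℝ, 0 ≤ N →
          (∀ (c : Rn n) (ρ : ℝ), 0 < ρ →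
            (⨅ k : ℝ, ((wMeas ω (cube c ρ))⁻¹ *
              ∫ x in cube c ρ, (|f x - k| / ω x) ^ r * ω x) ^ (1 / r)) ≤ N) →
          ∀ (c : Rn n) (ρ : ℝ), 0 < ρ →
            ((wMeas ω (cube c ρ))⁻¹ *
              ∫ x in cube c ρ, |f x - avg f c ρ| ^ r * ω x ^ (1 - r)) ^ (1 / r) ≤ C * N)) := by
  refine ⟨((1 + 4 ^ r * (A.toNNReal * (2 * 2 ^ n + 2))) ^ r⁻¹ : NNReal),
    NNReal.one_le_coe.2 (NNReal.one_le_rpow le_self_add (by positivity)), fun ω f hω hf => ?_⟩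
  simp only [div_rpow_mul_eq (abs_nonneg _) (hω.1 _)]
  refine ⟨fun c ρ _ => ciInf_le ⟨0, ?_⟩ (avg f c ρ), fun N hN hosc c ρ hρ => ?_⟩
  · rintro _ ⟨k, rfl⟩
    exact weightedOscillation_nonneg (fun x => (hω.1 x).le) f r (cube c ρ) k
  · lift N to NNReal using hN
    rw [avg_eq_setAverage f c hρ.le]
    refine weightedOscillation_setAverage_le_of_iInf_le hr0 hr1 hω hf ?_ (cube_mem_cubes c hρ)
    rintro _ ⟨c, ρ, hρ, rfl⟩
    exact hosc c ρ hρ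

/-- for `ω ∈ A₁` and `0 < r < 1`, the quantities `‖f‖_{BMO^r(ω)}`
(oscillation around the average) and `‖f‖_{BMO_r(ω)}` (infimal oscillation) are equivalent,
with constant depending only on `n`, `r`, `[ω]_{A₁}`. -/
theorem stmt2 (n : ℕ) (r A : ℝ) (hr0 : 0 < r) (hr1 : r < 1) (hA : 1 ≤ A) :
    ∃ C : ℝ, 1 ≤ C ∧
      ∀ (ω f : Rn n → ℝ), IsA1 ω A → LocallyIntegrable f volume →
        -- `‖f‖_{BMO_r(ω)} ≤ ‖f‖_{BMO^r(ω)}` (cube by cube)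
        ((∀ (c : Rn n) (ρ : ℝ), 0 < ρ →
            (⨅ k : ℝ, ((wMeas ω (cube c ρ))⁻¹ *
              ∫ x in cube c ρ, (|f x - k| / ω x) ^ r * ω x) ^ (1 / r)) ≤
            ((wMeas ω (cube c ρ))⁻¹ *
              ∫ x in cube c ρ, |f x - avg f c ρ| ^ r * ω x ^ (1 - r)) ^ (1 / r)) ∧
        -- `‖f‖_{BMO^r(ω)} ≤ C ‖f‖_{BMO_r(ω)}`
        (∀ N : ℝ, 0 ≤ N →
          (∀ (c : Rn n) (ρ : ℝ), 0 < ρ →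
            (⨅ k : ℝ, ((wMeas ω (cube c ρ))⁻¹ *
              ∫ x in cube c ρ, (|f x - k| / ω x) ^ r * ω x) ^ (1 / r)) ≤ N) →
          ∀ (c : Rn n) (ρ : ℝ), 0 < ρ →
            ((wMeas ω (cube c ρ))⁻¹ *
              ∫ x in cube c ρ, |f x - avg f c ρ| ^ r * ω x ^ (1 - r)) ^ (1 / r) ≤ C * N)) :=
  stmt2_general n r A hr0 hr1.le
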